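/- Suppose d is a metric on S such that for every i ∈ I and every continuous map γ : [0,1] → D one has L(γ, d[l^{(i)}]) = L(σᵢ ∘ γ, d). Then d(x,y) ≤ d[l](x,y) for all x, y ∈ S. -/

import Mathlib

noncomputable section

open Set
open scoped ENNReal

/-- The Euclidean plane `ℝ²` with the Euclidean metric. -/
abbrev E2 : Type := EuclideanSpace ℝ (Fin 2)

/-- Vertices of the fixed closed regular (equilateral) triangle of side length 1. -/
def p0 : E2 := !₂[0, 0]
def p1 : E2 := !₂[1, 0]
def p2 : E2 := !₂[1 / 2, Real.sqrt 3 / 2]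

/-- `Dtri` is the fixed closed regular triangle in `ℝ²` with edge length 1. -/
def Dtri : Set E2 := convexHull ℝ {p0, p1, p2}

/-- `V0` is the set of the three vertices of `Dtri`. -/
def V0 : Set E2 := {p0, p1, p2}

/-- The three closed edges of `Dtri`. -/
def e01 : Set E2 := segment ℝ p0 p1
def e12 : Set E2 := segment ℝ p1 p2
def e02 : Set E2 := segment ℝ p0 p2

/-- `E0` is the set of the three closed edges of `Dtri`. -/
def E0 : Set (Set E2) := {e01, e12, e02}

/-- The open edge `e° = e ∖ V₀`. -/
def eo (e : Set E2) : Set E2 := e \ V0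

/-- `Do = D°` is the interior of `Dtri` in `ℝ²`. -/
def Do : Set E2 := interior Dtri

/-- `l : E₀ → ℝ` is positive and satisfies the strict triangle inequalities:
`l e₁ + l e₂ > l e₃` whenever `{e₁, e₂, e₃} = E₀`. -/
def TriIneq (l : Set E2 → ℝ) : Prop :=
  (∀ e ∈ E0, 0 < l e) ∧
  ∀ e₁ e₂ e₃ : Set E2, ({e₁, e₂, e₃} : Set (Set E2)) = E0 → l e₁ + l e₂ > l e₃

/-- A linear map `f : ℝ² → ℝ²` realizes the edge lengths `l`, i.e. for each `e ∈ E₀`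
the segment `f(e)` has Euclidean length `l e`. -/
def Realizes (f : E2 →ₗ[ℝ] E2) (l : Set E2 → ℝ) : Prop :=
  dist (f p0) (f p1) = l e01 ∧ dist (f p1) (f p2) = l e12 ∧ dist (f p0) (f p2) = l e02

/-- The metric `d[l]` on `Dtri`, defined by `d[l](x,y) = |f x - f y|₂` for a linear map `f`
realizing the edge lengths `l` (this is independent of the choice of `f`). -/
def dD (l : Set E2 → ℝ) (x y : E2) : ℝ :=
  letI := Classical.propDecidable (∃ f : E2 →ₗ[ℝ] E2, Realizes f l)
  if h : ∃ f : E2 →ₗ[ℝ] E2, Realizes f l then dist (h.choose x) (h.choose y) else 0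

/-- A triangulation `T = (σᵢ)_{i ∈ I}`, `I = Fin n`, of a topological space `S`:
a finite family of continuous maps `σᵢ : Dtri → S` such that
(a) `σᵢ` is injective on each open edge, (b) `σᵢ` is injective on `D°`,
(c) `S` is the disjoint union of `⋃ᵢ σᵢ(V₀)`, the sets `σᵢ(D°)`, and the distinct sets
among the `σᵢ(e°)`, and (d) glued edges are identified by a linear homeomorphism. -/
structure Triangulation (S : Type) [TopologicalSpace S] (n : ℕ) where
  σ : Fin n → E2 → S
  continuousOn : ∀ i, ContinuousOn (σ i) Dtri
  inj_edge : ∀ i, ∀ e ∈ E0, InjOn (σ i) (eo e)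
  inj_int : ∀ i, InjOn (σ i) Do
  cover : (⋃ i, σ i '' V0) ∪ (⋃ i, σ i '' Do) ∪ (⋃ i, ⋃ e ∈ E0, σ i '' eo e) = univ
  disj_int : ∀ i j, i ≠ j → Disjoint (σ i '' Do) (σ j '' Do)
  disj_vert_int : ∀ j, Disjoint (⋃ i, σ i '' V0) (σ j '' Do)
  disj_vert_edge : ∀ j, ∀ e ∈ E0, Disjoint (⋃ i, σ i '' V0) (σ j '' eo e)
  disj_int_edge : ∀ i j, ∀ e ∈ E0, Disjoint (σ i '' Do) (σ j '' eo e)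
  edge_eq_or_disjoint : ∀ i j, ∀ e ∈ E0, ∀ e' ∈ E0,
    σ i '' eo e = σ j '' eo e' ∨ Disjoint (σ i '' eo e) (σ j '' eo e')
  glue : ∀ i j, ∀ e ∈ E0, ∀ e' ∈ E0, σ i '' eo e = σ j '' eo e' →
    ∃ A : E2 →ᵃ[ℝ] E2, A '' e = e' ∧ ∀ x ∈ e, σ j (A x) = σ i x

variable {S : Type} [TopologicalSpace S] {n : ℕ}

/-- `l ∈ ℝ^{E(T)}_Δ`: `l` assigns positive lengths to the edges of `T` satisfying the
strict triangle inequalities in each triangle. -/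
def TriIneqT (T : Triangulation S n) (l : Set S → ℝ) : Prop :=
  (∀ (i : Fin n), ∀ e ∈ E0, 0 < l (T.σ i '' e)) ∧
  ∀ (i : Fin n), ∀ e₁ e₂ e₃ : Set E2, ({e₁, e₂, e₃} : Set (Set E2)) = E0 →
    l (T.σ i '' e₁) + l (T.σ i '' e₂) > l (T.σ i '' e₃)

/-- The restricted edge lengths `l^{(i)}` on the triangle `σᵢ(D)`: `l^{(i)}_e = l_{σᵢ(e)}`. -/
def lRes (T : Triangulation S n) (l : Set S → ℝ) (i : Fin n) : Set E2 → ℝ :=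
  fun e => l (T.σ i '' e)

/-- `dᵢ(x,y) = min { d[l^{(i)}](x',y') : x' ∈ σᵢ⁻¹(x), y' ∈ σᵢ⁻¹(y) }` for `x, y ∈ σᵢ(D)`. -/
def dTri (T : Triangulation S n) (l : Set S → ℝ) (i : Fin n) (x y : S) : ℝ :=
  sInf { r | ∃ x' ∈ Dtri, ∃ y' ∈ Dtri,
    T.σ i x' = x ∧ T.σ i y' = y ∧ r = dD (lRes T l i) x' y' }

/-- The set of sums `Σ_j d_{i_j}(x_{j-1}, x_j)` over chains from `x` to `y`. -/
def chainSums (T : Triangulation S n) (l : Set S → ℝ) (x y : S) : Set ℝ :=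
  { r | ∃ (k : ℕ) (c : ℕ → S) (idx : ℕ → Fin n),
      c 0 = x ∧ c k = y ∧
      (∀ j < k, c j ∈ T.σ (idx j) '' Dtri ∧ c (j + 1) ∈ T.σ (idx j) '' Dtri) ∧
      r = ∑ j ∈ Finset.range k, dTri T l (idx j) (c j) (c (j + 1)) }

/-- The glued metric `d[l]` on `S`. -/
def dGlue (T : Triangulation S n) (l : Set S → ℝ) (x y : S) : ℝ :=
  sInf (chainSums T l x y)

/-- The length `L(γ, d)` of a curve `γ : [0,1] → X` with respect to a metric `d`:
`L(γ,d) = sup { Σ_j d(γ t_{j-1}, γ t_j) : 0 = t₀ < t₁ < ... < t_k = 1 }`, valued in `[0,∞]`. -/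
def pathLen {X : Type} (d : X → X → ℝ) (γ : ℝ → X) : ℝ≥0∞ :=
  ⨆ (k : ℕ) (t : Fin (k + 1) → ℝ) (_ : StrictMono t ∧ t 0 = 0 ∧ t (Fin.last k) = 1),
    ENNReal.ofReal (∑ j : Fin k, d (γ (t j.castSucc)) (γ (t j.succ)))

lemma V0_sub : V0 ⊆ Dtri := subset_convexHull ℝ _

lemma edge_sub {e : Set E2} (he : e ∈ E0) : e ⊆ Dtri := by
  have h0 : p0 ∈ Dtri := V0_sub (by simp [V0])
  have h1 : p1 ∈ Dtri := V0_sub (by simp [V0])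
  have h2 : p2 ∈ Dtri := V0_sub (by simp [V0])
  have hc : Convex ℝ Dtri := convex_convexHull ℝ _
  simp only [E0, mem_insert_iff, mem_singleton_iff] at he
  rcases he with rfl | rfl | rfl
  · exact hc.segment_subset h0 h1
  · exact hc.segment_subset h1 h2
  · exact hc.segment_subset h0 h2

lemma isCompact_Dtri : IsCompact Dtri :=
  Set.Finite.isCompact_convexHull (𝕜 := ℝ) (by simp)

lemma exists_mem_tri (T : Triangulation S n) (x : S) : ∃ i, x ∈ T.σ i '' Dtri := by
  have hx : x ∈ (univ : Set S) := mem_univ x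
  rw [← T.cover] at hx
  rcases hx with (hx | hx) | hx
  · obtain ⟨i, hi⟩ := mem_iUnion.1 hx
    exact ⟨i, image_mono V0_sub hi⟩
  · obtain ⟨i, hi⟩ := mem_iUnion.1 hx
    exact ⟨i, image_mono interior_subset hi⟩
  · obtain ⟨i, hi⟩ := mem_iUnion.1 hx
    obtain ⟨e, hi⟩ := mem_iUnion.1 hi
    obtain ⟨he, hi⟩ := mem_iUnion.1 hi
    exact ⟨i, image_mono (diff_subset.trans (edge_sub he)) hi⟩

lemma chainSums_self (T : Triangulation S n) (l : Set S → ℝ) (x : S) :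
    (chainSums T l x x).Nonempty := by
  obtain ⟨i, -⟩ := exists_mem_tri T x
  exact ⟨_, 0, fun _ => x, fun _ => i, rfl, rfl, by simp, rfl⟩

lemma chainSums_step (T : Triangulation S n) (l : Set S → ℝ) {x y z : S} {i : Fin n}
    (h : (chainSums T l x y).Nonempty) (hy : y ∈ T.σ i '' Dtri) (hz : z ∈ T.σ i '' Dtri) :
    (chainSums T l x z).Nonempty := by
  obtain ⟨_, k, c, idx, h0, hk, hc, -⟩ := h
  refine ⟨_, k + 1, Function.update c (k + 1) z, Function.update idx k i, ?_, ?_, ?_, rfl⟩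
  · simpa [Function.update_apply] using h0
  · simp
  · intro j hj
    rcases Nat.lt_succ_iff_lt_or_eq.1 hj with hj | rfl
    · have h1 : j ≠ k + 1 := by omega
      have h2 : j ≠ k := by omega
      simpa [Function.update_apply, h1, h2] using hc j hj
    · simpa [Function.update_apply, hk] using And.intro hy hz

lemma chainSums_nonempty [T2Space S] [ConnectedSpace S] (T : Triangulation S n)
    (l : Set S → ℝ) (x y : S) : (chainSums T l x y).Nonempty := by
  have hcl : ∀ i, IsClosed (T.σ i '' Dtri) := fun i =>
    (isCompact_Dtri.image_of_continuousOn (T.continuousOn i)).isClosed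
  let C : Set S := {y | (chainSums T l x y).Nonempty}
  let A : Set (Fin n) := {i | ∃ z ∈ T.σ i '' Dtri, z ∈ C}
  have hC : C = ⋃ i ∈ A, T.σ i '' Dtri := by
    ext y
    simp only [mem_iUnion, exists_prop]
    constructor
    · intro hy
      obtain ⟨i, hi⟩ := exists_mem_tri T y
      exact ⟨i, ⟨y, hi, hy⟩, hi⟩
    · rintro ⟨i, ⟨z, hz, hzC⟩, hi⟩
      exact chainSums_step T l hzC hz hi
  have hC' : Cᶜ = ⋃ i ∈ Aᶜ, T.σ i '' Dtri := by
    ext y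
    simp only [mem_iUnion, exists_prop]
    constructor
    · intro hy
      obtain ⟨i, hi⟩ := exists_mem_tri T y
      refine ⟨i, ?_, hi⟩
      rintro ⟨z, hz, hzC⟩
      exact hy (chainSums_step T l hzC hz hi)
    · rintro ⟨i, hA, hi⟩ hyC
      exact hA ⟨y, hi, hyC⟩
  have c1 : IsClosed C := by
    rw [hC]; exact (Set.toFinite A).isClosed_biUnion fun i _ => hcl i
  have c2 : IsClosed Cᶜ := by
    rw [hC']; exact (Set.toFinite Aᶜ).isClosed_biUnion fun i _ => hcl i
  have hu : C = univ := IsClopen.eq_univ ⟨c1, isClosed_compl_iff.1 c2⟩ ⟨x, chainSums_self T l x⟩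
  have : y ∈ C := hu ▸ mem_univ y
  exact this

lemma dD_nonneg (l : Set E2 → ℝ) (x y : E2) : 0 ≤ dD l x y := by
  unfold dD
  split_ifs
  · exact dist_nonneg
  · exact le_rfl

lemma dD_lineMap (l : Set E2 → ℝ) (x y : E2) {s t : ℝ} (h : s ≤ t) :
    dD l (AffineMap.lineMap x y s) (AffineMap.lineMap x y t) = (t - s) * dD l x y := by
  unfold dD
  split_ifs with hf
  · set f := hf.choose
    have e : ∀ r : ℝ, f (AffineMap.lineMap x y r) = AffineMap.lineMap (f x) (f y) r := by
      intro r
      simp [AffineMap.lineMap_apply]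
    rw [e, e, dist_lineMap_lineMap, Real.dist_eq, abs_sub_comm, abs_of_nonneg (by linarith)]
  · simp

lemma pathLen_lineMap_le (l : Set E2 → ℝ) (x y : E2) :
    pathLen (dD l) (fun t : ℝ => AffineMap.lineMap x y t) ≤ ENNReal.ofReal (dD l x y) := by
  refine iSup_le fun k => iSup_le fun t => iSup_le fun ht => ENNReal.ofReal_le_ofReal ?_
  obtain ⟨hm, h0, h1⟩ := ht
  have : ∀ j : Fin k, dD l (AffineMap.lineMap x y (t j.castSucc))
      (AffineMap.lineMap x y (t j.succ)) = (t j.succ - t j.castSucc) * dD l x y :=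
    fun j => dD_lineMap l x y (hm.monotone j.castSucc_lt_succ.le)
  simp only [this]
  rw [← Finset.sum_mul, Finset.sum_sub_distrib]
  have e1 := Fin.sum_univ_succ t
  have e2 := Fin.sum_univ_castSucc t
  have : ∑ j : Fin k, t j.succ - ∑ j : Fin k, t j.castSucc = 1 := by
    rw [h0] at e1; rw [h1] at e2; linarith
  rw [this, one_mul]

lemma le_pathLen {X : Type} (d : X → X → ℝ) (γ : ℝ → X) :
    ENNReal.ofReal (d (γ 0) (γ 1)) ≤ pathLen d γ := by
  refine le_trans ?_ (le_iSup _ 1)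
  refine le_trans ?_ (le_iSup _ ![0, 1])
  refine le_trans ?_ (le_iSup _ ?_)
  · simp
  · refine ⟨?_, rfl, rfl⟩
    intro a b hab
    fin_cases a <;> fin_cases b <;> simp_all

/-- if `d` is a metric on `S` such that for every `i ∈ I` and every
continuous curve `γ : [0,1] → Dtri` one has `L(γ, d[l^{(i)}]) = L(σᵢ ∘ γ, d)`, then
`d(x,y) ≤ d[l](x,y)` for all `x, y ∈ S`. -/
theorem le_dGlue_of_length_preserving
    {S : Type} [TopologicalSpace S] [CompactSpace S] [T2Space S] [ConnectedSpace S]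
    {n : ℕ} (T : Triangulation S n) (l : Set S → ℝ) (hl : TriIneqT T l)
    (d : S → S → ℝ)
    (hd_eq : ∀ x y : S, d x y = 0 ↔ x = y)
    (hd_symm : ∀ x y : S, d x y = d y x)
    (hd_tri : ∀ x y z : S, d x z ≤ d x y + d y z)
    (hL : ∀ i : Fin n, ∀ γ : ℝ → E2,
      ContinuousOn γ (Icc (0:ℝ) 1) → (∀ t ∈ Icc (0:ℝ) 1, γ t ∈ Dtri) →
      pathLen (dD (lRes T l i)) γ = pathLen d (T.σ i ∘ γ)) :
    ∀ x y : S, d x y ≤ dGlue T l x y := by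
  have hstep : ∀ i : Fin n, ∀ x' ∈ Dtri, ∀ y' ∈ Dtri,
      d (T.σ i x') (T.σ i y') ≤ dD (lRes T l i) x' y' := by
    intro i x' hx y' hy
    have hc : Convex ℝ Dtri := convex_convexHull ℝ _
    have h1 := hL i (fun t : ℝ => AffineMap.lineMap x' y' t)
      (AffineMap.lineMap_continuous.continuousOn)
      (fun t ht => hc.lineMap_mem hx hy ht)
    have h2 := le_pathLen d (T.σ i ∘ fun t : ℝ => AffineMap.lineMap x' y' t)
    rw [← h1] at h2
    have h3 := h2.trans (pathLen_lineMap_le _ _ _)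
    simp only [Function.comp, AffineMap.lineMap_apply_zero, AffineMap.lineMap_apply_one] at h3
    exact (ENNReal.ofReal_le_ofReal_iff (dD_nonneg _ _ _)).1 h3
  intro x y
  refine le_csInf (chainSums_nonempty T l x y) ?_
  rintro r ⟨k, c, idx, rfl, rfl, hc, rfl⟩
  have hsum : ∀ m ≤ k, d (c 0) (c m) ≤
      ∑ j ∈ Finset.range m, dTri T l (idx j) (c j) (c (j + 1)) := by
    intro m
    induction m with
    | zero => intro _; simp [(hd_eq _ _).2]
    | succ m ih =>
      intro hm
      rw [Finset.sum_range_succ]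
      refine (hd_tri _ (c m) _).trans (add_le_add (ih (by omega)) ?_)
      obtain ⟨⟨a, ha, hax⟩, ⟨b, hb, hbx⟩⟩ := hc m (by omega)
      refine le_csInf ⟨_, a, ha, b, hb, hax, hbx, rfl⟩ ?_
      rintro r ⟨x', hx', y', hy', h1, h2, rfl⟩
      rw [← h1, ← h2]
      exact hstep _ _ hx' _ hy'
  exact hsum k le_rfl
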